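/- Let f : X → ℝ and g : X → H be continuously differentiable and K ⊆ H a nonempty closed convex set. A pair (x̄, λ̄) ∈ X × H is a KKT point of (P) (i.e., ∇f(x̄) + ∇g(x̄)*λ̄ = 0 and λ̄ ∈ N_K(g(x̄))) if and only if for every c > 0 one has ∇f(x̄) + c·∇g(x̄)*[g(x̄) + c⁻¹λ̄ − Π_K(g(x̄) + c⁻¹λ̄)] = 0 and g(x̄) − Π_K(g(x̄) + c⁻¹λ̄) = 0, i.e., ∇_{(x,λ)}𝓛(x̄, λ̄, c) = 0. -/

import Mathlib

open Metric Set Filter Topology Asymptotics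
open scoped RealInnerProductSpace

noncomputable section

variable {X H : Type*} [NormedAddCommGroup X] [InnerProductSpace ℝ X] [FiniteDimensional ℝ X]
variable [NormedAddCommGroup H] [InnerProductSpace ℝ H] [FiniteDimensional ℝ H]

/-- The normal cone to a convex set `K` at `y` (empty if `y ∉ K`). -/
def normalCone (K : Set H) (y : H) : Set H :=
  {v | y ∈ K ∧ ∀ z ∈ K, ⟪v, z - y⟫ ≤ 0}

/-- The gradient in `x` of the Lagrangian `L(x, λ) = f(x) + ⟨λ, g(x)⟩`,
i.e. `∇f(x) + ∇g(x)* λ`. -/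
def gradLx (f : X → ℝ) (g : X → H) (x : X) (lam : H) : X :=
  gradient f x + ContinuousLinearMap.adjoint (fderiv ℝ g x) lam

/-!
Since `N_K(y)` is a cone, `λ ∈ N_K(y)` says that `(y + c⁻¹ λ) - y ∈ N_K(y)`, which for convex `K` is
the variational characterization of `y = Π_K(y + c⁻¹ λ)`. Hence `λ ∈ N_K(g(x))` is equivalent to
`∇_λ 𝓛(x, λ, c) = 0`, and once this holds `c (g(x) + c⁻¹ λ - Π_K(g(x) + c⁻¹ λ)) = λ`, so that
`∇_x 𝓛(x, λ, c)` is the gradient of the ordinary Lagrangian. A single `c > 0` already suffices.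
-/

section NearestPoint

variable {E : Type*} [NormedAddCommGroup E] [InnerProductSpace ℝ E] {K : Set E} {c : ℝ}
  {u p q y v : E}

lemma smul_mem_normalCone_iff (hc : 0 < c) : c • v ∈ normalCone K y ↔ v ∈ normalCone K y := by
  simp only [normalCone, mem_ofPred_eq, real_inner_smul_left, mul_nonpos_iff_pos_imp_nonpos, hc,
    hc.le, forall_const, implies_true, and_true]

/-- `p` is a nearest point of `K` to `u`, that is, a value of the metric projection of `u` onto `K`.
Stated as a relation because such a `p` need neither exist nor be unique for a general set `K`. -/
def IsNearestPoint (K : Set E) (u p : E) : Prop :=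
  p ∈ K ∧ ∀ z ∈ K, ‖u - p‖ ≤ ‖u - z‖

namespace IsNearestPoint

lemma sub_mem_normalCone (hK : Convex ℝ K) (hp : IsNearestPoint K u p) :
    u - p ∈ normalCone K p := by
  have hmin : IsMinOn (fun z ↦ ‖u - z‖) K p := hp.2
  exact ⟨hp.1, (norm_eq_iInf_iff_real_inner_le_zero hK hp.1).1 (hmin.iInf_eq hp.1).symm⟩

lemma eq_of_sub_mem_normalCone (hp : IsNearestPoint K u p) (hq : u - q ∈ normalCone K q) :
    p = q := by
  obtain ⟨hqK, hinner⟩ := hq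
  have hnorm : ‖u - p‖ ^ 2 ≤ ‖u - q‖ ^ 2 := by gcongr; exact hp.2 q hqK
  have hexpand : ‖u - p‖ ^ 2 = ‖u - q‖ ^ 2 - 2 * ⟪u - q, p - q⟫ + ‖p - q‖ ^ 2 := by
    rw [← norm_sub_sq_real, sub_sub_sub_cancel_right]
  have hsq : ‖p - q‖ ^ 2 ≤ 0 := by linarith [hinner p hp.1]
  exact sub_eq_zero.1 (norm_eq_zero.1 (sq_nonpos_iff _ |>.1 hsq))

lemma sub_mem_normalCone_iff_eq (hK : Convex ℝ K) (hp : IsNearestPoint K u p) :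
    u - q ∈ normalCone K q ↔ q = p :=
  ⟨fun hq ↦ (hp.eq_of_sub_mem_normalCone hq).symm, fun h ↦ h ▸ hp.sub_mem_normalCone hK⟩

lemma mem_normalCone_iff_eq (hK : Convex ℝ K) (hc : 0 < c)
    (hp : IsNearestPoint K (y + c • v) p) : v ∈ normalCone K y ↔ y = p := by
  rw [← hp.sub_mem_normalCone_iff_eq hK, add_sub_cancel_left, smul_mem_normalCone_iff hc]

end IsNearestPoint

end NearestPoint

theorem kkt_iff_gradAugLag_eq_zero_general {E F : Type*}
    [NormedAddCommGroup E] [InnerProductSpace ℝ E] [CompleteSpace E]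
    [NormedAddCommGroup F] [InnerProductSpace ℝ F] [CompleteSpace F]
    {f : E → ℝ} {g : E → F} {x f' : E} {g' : E →L[ℝ] F}
    (hf : HasGradientAt f f' x) (hg : HasFDerivAt g g' x)
    {K : Set F} (hK : Convex ℝ K) {c : ℝ} (hc : 0 < c) {lam p : F}
    (hp : IsNearestPoint K (g x + c⁻¹ • lam) p) :
    (f' + g'.adjoint lam = 0 ∧ lam ∈ normalCone K (g x)) ↔
      f' + c • g'.adjoint (g x + c⁻¹ • lam - p) = 0 ∧ g x - p = 0 := by
  rw [hp.mem_normalCone_iff_eq hK (inv_pos.2 hc), sub_eq_zero]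
  refine and_congr_left fun hgp ↦ ?_
  have hmultiplier : c • g'.adjoint (g x + c⁻¹ • lam - p) = g'.adjoint lam := by
    rw [← hgp, add_sub_cancel_left, map_smul, smul_inv_smul₀ hc.ne']
  rw [hmultiplier]

/-- `(x̄, λ̄)` is a KKT point iff the full gradient of the augmented Lagrangian vanishes
for every `c > 0`. -/
theorem kkt_iff_gradAugLag_eq_zero
    (f : X → ℝ) (g : X → H) (K : Set H)
    (hf : ContDiff ℝ 1 f) (hg : ContDiff ℝ 1 g)
    (hKne : K.Nonempty) (hKcl : IsClosed K) (hKconv : Convex ℝ K)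
    (projK : H → H)
    (hproj : ∀ y : H, projK y ∈ K ∧ ∀ z ∈ K, ‖y - projK y‖ ≤ ‖y - z‖)
    (xbar : X) (lambar : H) :
    (gradLx f g xbar lambar = 0 ∧ lambar ∈ normalCone K (g xbar)) ↔
      ∀ c : ℝ, 0 < c →
        gradient f xbar + c • (ContinuousLinearMap.adjoint (fderiv ℝ g xbar)
          (g xbar + c⁻¹ • lambar - projK (g xbar + c⁻¹ • lambar))) = 0 ∧
        g xbar - projK (g xbar + c⁻¹ • lambar) = 0 := by
  have kkt_iff (c : ℝ) (hc : 0 < c) := kkt_iff_gradAugLag_eq_zero_general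
    (hf.differentiable one_ne_zero xbar).hasGradientAt
    (hg.differentiable one_ne_zero xbar).hasFDerivAt hKconv hc (hproj (g xbar + c⁻¹ • lambar))
  exact ⟨fun h c hc ↦ (kkt_iff c hc).1 h, fun h ↦ (kkt_iff 1 one_pos).2 (h 1 one_pos)⟩
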